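/- arXiv:1810.00655 — 2 statements merged into one kernel-verified Lean document; each statement's English description precedes it below -/
import Mathlib

section
/- There exist at least four pairwise distinct quadruples (x1, x2, x12, x13) of positive real numbers solving the system f1 = f2 = f3 = f4 = 0 below and satisfying x13 ≠ 1; moreover they can be chosen so that their x13-coordinates are pairwise distinct, with two of them having x13 ∈ (0,1) and two having x13 ∈ (1,2). -/
/-- A quadruple `(x1, x2, x12, x13)` of positive reals solving the Einstein system for
`Ad(Sp(1)×Sp(1)×Sp(1))`-invariant metrics on `V₂ℍ³ = Sp(3)/Sp(1)` (normalized by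
`x23 = 1`). -/
def IsEinsteinSolV2H3 (v : ℝ × ℝ × ℝ × ℝ) : Prop :=
  let x1 := v.1; let x2 := v.2.1; let x12 := v.2.2.1; let x13 := v.2.2.2
  0 < x1 ∧ 0 < x2 ∧ 0 < x12 ∧ 0 < x13 ∧
  x1^2*x12^2*x2 + x1^2*x13^2*x2 - x1*x12^2*x13^2*x2^2 - 2*x1*x12^2*x13^2
    - x1*x13^2*x2^2 + 2*x12^2*x13^2*x2 = 0 ∧
  3*x1*x13*x2 - 2*x12^3*x2 + 2*x12^2*x13*x2^2 + 4*x12^2*x13 + 2*x12*x13^2*x2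
    - 16*x12*x13*x2 + 2*x12*x2 + 5*x13*x2^2 = 0 ∧
  3*x1*x12^2 - 3*x1*x13^2 + 4*x12^3*x13 - 16*x12^2*x13 - 4*x12*x13^3
    + 16*x12*x13^2 - 3*x13^2*x2 = 0 ∧
  -3*x1*x12 + 3*x12*x13^2*x2 - 16*x12*x13^2 + 16*x12*x13 + 4*x13^3 - 4*x13 = 0

/-!
Each solution is certified near a numerical root `c` of the polynomial map `f` by a quantitative
Newton argument: if `A` approximates the inverse Jacobian at `c`, then `A ∘ f` is close to the
identity on a small ball around `c`, hence maps that ball onto a neighbourhood of `A (f c) ≈ 0` and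
has a zero in it. The variation of the Jacobian over the ball is controlled by one variable: for a
polynomial `p` with nonnegative coefficients, the second derivative of `t ↦ p(t, …, t)` at `ρ` is a
Lipschitz constant of the gradient of `p` on the sup-norm ball of radius `ρ`. Splitting `f` into its
monomials of positive and of negative sign reduces the general case to this one.
-/

open Metric
open MvPolynomial (pderiv)
open Polynomial (derivative)
open scoped Matrix NNReal Polynomial Matrix.Norms.Operator

section NewtonKantorovich

variable {E F : Type*} [NormedAddCommGroup E] [NormedSpace ℝ E] [CompleteSpace E]
  [NormedAddCommGroup F] [NormedSpace ℝ F]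

theorem exists_zero_of_norm_id_sub_comp_le {f : E → F} {f' : E → E →L[ℝ] F} {A : F →L[ℝ] E}
    {c : E} {r : ℝ} {K : ℝ≥0} (hA : Function.Injective A)
    (hf : ∀ x ∈ closedBall c r, HasFDerivAt f (f' x) x)
    (hK : ∀ x ∈ closedBall c r, ‖ContinuousLinearMap.id ℝ E - A ∘L f' x‖ ≤ K)
    (hc : ‖A (f c)‖ ≤ (1 - K) * r) (hr : 0 ≤ r) :
    ∃ x ∈ closedBall c r, f x = 0 := by
  have happrox : ApproximatesLinearOn (A ∘ f) (.id ℝ E) (closedBall c r) K := by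
    intro x hx y hy
    refine (convex_closedBall c r).norm_image_sub_le_of_norm_hasFDerivWithin_le'
      (fun z hz => (A.hasFDerivAt.comp z (hf z hz)).hasFDerivWithinAt) (fun z hz => ?_) hy hx
    rw [norm_sub_rev]
    exact hK z hz
  let idInv : (ContinuousLinearMap.id ℝ E).NonlinearRightInverse :=
    ⟨id, 1, fun y => by simp, fun y => rfl⟩
  have hzero : (0 : E) ∈ closedBall ((A ∘ f) c) (((idInv.nnnorm : ℝ)⁻¹ - K) * r) := by
    simpa [idInv] using hc
  obtain ⟨x, hx, hfx⟩ :=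
    happrox.surjOn_closedBall_of_nonlinearRightInverse idInv hr subset_rfl hzero
  exact ⟨x, hx, hA (hfx.trans (map_zero A).symm)⟩

end NewtonKantorovich

section DiagonalMajorant

variable {σ R : Type*} [CommSemiring R]

theorem pderiv_ofNat (i : σ) (n : ℕ) [n.AtLeastTwo] :
    pderiv i (ofNat(n) : MvPolynomial σ R) = 0 :=
  Derivation.map_natCast _ n

/-- The univariate polynomial `p(t, …, t)`, the restriction of `p` to the diagonal. When the
coefficients of `p` are nonnegative it bounds `p`, and its derivatives bound those of `p`, on
sup-norm balls. -/
noncomputable def diagonalPolynomial (p : MvPolynomial σ R) : R[X] :=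
  MvPolynomial.aeval (fun _ => Polynomial.X) p

theorem derivative_diagonalPolynomial [Fintype σ] (p : MvPolynomial σ R) :
    derivative (diagonalPolynomial p) = ∑ i, diagonalPolynomial (pderiv i p) := by
  classical
  induction p using MvPolynomial.induction_on with
  | C a => simp [diagonalPolynomial, Polynomial.algebraMap_eq]
  | add p q hp hq =>
    simp only [diagonalPolynomial, map_add, Finset.sum_add_distrib] at *
    rw [hp, hq]
  | mul_X p j hp =>
    simp only [diagonalPolynomial, map_mul, MvPolynomial.aeval_X, Polynomial.derivative_mul] at *
    simp [hp, Pi.single_apply, Finset.sum_add_distrib, Finset.mul_sum, mul_comm, add_comm,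
      apply_ite]

theorem hasFDerivAt_aeval {𝕜 : Type*} [NontriviallyNormedField 𝕜] [Algebra R 𝕜] [Fintype σ]
    (p : MvPolynomial σ R) (x : σ → 𝕜) :
    HasFDerivAt (fun y : σ → 𝕜 => MvPolynomial.aeval y p)
      (∑ i, MvPolynomial.aeval x (pderiv i p) •
        (ContinuousLinearMap.proj i : (σ → 𝕜) →L[𝕜] 𝕜)) x := by
  classical
  induction p using MvPolynomial.induction_on with
  | C a =>
    simp only [MvPolynomial.algHom_C]
    exact (hasFDerivAt_const (algebraMap R 𝕜 a) x).congr_fderiv (by ext v; simp)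
  | add p q hp hq =>
    simp only [map_add]
    exact (hp.fun_add hq).congr_fderiv (by ext v; simp [add_mul, Finset.sum_add_distrib])
  | mul_X p j hp =>
    simp only [map_mul, MvPolynomial.aeval_X]
    refine (hp.fun_mul (hasFDerivAt_apply j x)).congr_fderiv ?_
    ext v
    simp [Pi.single_apply, Finset.sum_add_distrib, add_mul, Finset.mul_sum, mul_assoc, apply_ite]

variable {p : MvPolynomial σ ℝ≥0} {ρ : ℝ} {x y : σ → ℝ}

theorem abs_aeval_le_aeval_diagonalPolynomial [Fintype σ] (hx : ‖x‖ ≤ ρ) :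
    |MvPolynomial.aeval x p| ≤ Polynomial.aeval ρ (diagonalPolynomial p) := by
  have : 0 ≤ ρ := (norm_nonneg x).trans hx
  induction p using MvPolynomial.induction_on with
  | C a => simp [diagonalPolynomial, NNReal.algebraMap_eq_coe]
  | add p q hp hq =>
    simp only [diagonalPolynomial, map_add] at *
    exact (abs_add_le _ _).trans (add_le_add hp hq)
  | mul_X p j hp =>
    simp only [diagonalPolynomial, map_mul, MvPolynomial.aeval_X, Polynomial.aeval_X, abs_mul] at *
    gcongr
    · exact (abs_nonneg _).trans hp
    · exact (norm_le_pi_norm x j).trans hx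

theorem abs_aeval_sub_le [Fintype σ] (hx : ‖x‖ ≤ ρ) (hy : ‖y‖ ≤ ρ) :
    |MvPolynomial.aeval x p - MvPolynomial.aeval y p| ≤
      Polynomial.aeval ρ (derivative (diagonalPolynomial p)) * ‖x - y‖ := by
  refine (convex_closedBall (0 : σ → ℝ) ρ).norm_image_sub_le_of_norm_hasFDerivWithin_le
    (fun z _ => (hasFDerivAt_aeval p z).hasFDerivWithinAt) (fun z hz => ?_)
    (mem_closedBall_zero_iff.2 hy) (mem_closedBall_zero_iff.2 hx)
  rw [derivative_diagonalPolynomial, map_sum]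
  refine norm_sum_le_of_le _ fun i _ => ?_
  have hproj : ‖(ContinuousLinearMap.proj i : (σ → ℝ) →L[ℝ] ℝ)‖ ≤ 1 :=
    ContinuousLinearMap.opNorm_le_bound _ zero_le_one fun v => by simpa using norm_le_pi_norm v i
  rw [norm_smul]
  exact (mul_le_of_le_one_right (norm_nonneg _) hproj).trans
    (abs_aeval_le_aeval_diagonalPolynomial (mem_closedBall_zero_iff.1 hz))

theorem sum_abs_aeval_pderiv_sub_le [Fintype σ] (hx : ‖x‖ ≤ ρ) (hy : ‖y‖ ≤ ρ) :
    ∑ i, |MvPolynomial.aeval x (pderiv i p) - MvPolynomial.aeval y (pderiv i p)| ≤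
      Polynomial.aeval ρ (derivative (derivative (diagonalPolynomial p))) * ‖x - y‖ := by
  rw [derivative_diagonalPolynomial, Polynomial.derivative_sum, map_sum, Finset.sum_mul]
  exact Finset.sum_le_sum fun i _ => abs_aeval_sub_le hx hy

end DiagonalMajorant

section PolynomialSystem

variable {ι σ : Type*}

/-- The polynomial map `x ↦ P x - N x` of a system of real polynomials. It is presented by two
systems with nonnegative coefficients so that both can be bounded by their diagonal restrictions. -/
noncomputable def polynomialMap (P N : ι → MvPolynomial σ ℝ≥0) (x : σ → ℝ) : ι → ℝ :=
  fun i => MvPolynomial.aeval x (P i) - MvPolynomial.aeval x (N i)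

/-- The Jacobian matrix of `polynomialMap P N` at `x`, with the equations indexing the rows. -/
noncomputable def polynomialJacobian (P N : ι → MvPolynomial σ ℝ≥0) (x : σ → ℝ) :
    Matrix ι σ ℝ :=
  Matrix.of fun i j =>
    MvPolynomial.aeval x (pderiv j (P i)) - MvPolynomial.aeval x (pderiv j (N i))

variable [Fintype σ]

theorem hasFDerivAt_polynomialMap (P N : ι → MvPolynomial σ ℝ≥0) (x : σ → ℝ) :
    HasFDerivAt (polynomialMap P N)
      (ContinuousLinearMap.mk (polynomialJacobian P N x).mulVecLin) x := by
  refine hasFDerivAt_pi'' fun i => ?_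
  refine ((hasFDerivAt_aeval (P i) x).fun_sub (hasFDerivAt_aeval (N i) x)).congr_fderiv ?_
  ext v
  simp [polynomialJacobian, Matrix.mulVec, dotProduct, sub_mul]

variable [Fintype ι]

theorem linfty_opNorm_le_iff {A : Matrix ι σ ℝ} {r : ℝ} (hr : 0 ≤ r) :
    ‖A‖ ≤ r ↔ ∀ i, ∑ j, |A i j| ≤ r := by
  lift r to ℝ≥0 using hr
  rw [Matrix.linfty_opNorm_def, NNReal.coe_le_coe, Finset.sup_le_iff]
  simp [← NNReal.coe_le_coe]

variable {P N : ι → MvPolynomial σ ℝ≥0}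

theorem norm_polynomialJacobian_sub_le {L : ℝ≥0} {ρ : ℝ} {x y : σ → ℝ}
    (hL : ∀ i, Polynomial.aeval ρ (derivative (derivative (diagonalPolynomial (P i + N i)))) ≤ L)
    (hx : ‖x‖ ≤ ρ) (hy : ‖y‖ ≤ ρ) :
    ‖polynomialJacobian P N x - polynomialJacobian P N y‖ ≤ L * ‖x - y‖ := by
  rw [linfty_opNorm_le_iff (by positivity)]
  intro i
  calc ∑ j, |(polynomialJacobian P N x - polynomialJacobian P N y) i j|
    _ ≤ ∑ j, |MvPolynomial.aeval x (pderiv j (P i)) - MvPolynomial.aeval y (pderiv j (P i))| +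
        ∑ j, |MvPolynomial.aeval x (pderiv j (N i)) - MvPolynomial.aeval y (pderiv j (N i))| := by
      rw [← Finset.sum_add_distrib]
      refine Finset.sum_le_sum fun j _ => ?_
      simp only [polynomialJacobian, Matrix.sub_apply, Matrix.of_apply,
        sub_sub_sub_comm _ _ (MvPolynomial.aeval y _)]
      exact abs_sub _ _
    _ ≤ Polynomial.aeval ρ (derivative (derivative (diagonalPolynomial (P i + N i)))) *
        ‖x - y‖ := by
      simp only [diagonalPolynomial, map_add, add_mul]
      exact add_le_add (sum_abs_aeval_pderiv_sub_le hx hy) (sum_abs_aeval_pderiv_sub_le hx hy)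
    _ ≤ L * ‖x - y‖ := by gcongr; exact hL i

end PolynomialSystem

section SquareSystem

variable {ι : Type*} [Fintype ι] [DecidableEq ι]

theorem isUnit_of_norm_one_sub_mul_lt_one {A B : Matrix ι ι ℝ} (h : ‖1 - A * B‖ < 1) :
    IsUnit A := by
  have hAB : IsUnit (A * B) := by simpa using isUnit_one_sub_of_norm_lt_one h
  rw [Matrix.isUnit_iff_isUnit_det, Matrix.det_mul] at hAB
  exact (Matrix.isUnit_iff_isUnit_det A).2 (isUnit_of_mul_isUnit_left hAB)

theorem exists_polynomialMap_eq_zero {P N : ι → MvPolynomial ι ℝ≥0} {A : Matrix ι ι ℝ}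
    {c : ι → ℝ} {r ρ K : ℝ} {L : ℝ≥0} (hr : 0 ≤ r) (hρ : ‖c‖ + r ≤ ρ)
    (hL : ∀ i, Polynomial.aeval ρ (derivative (derivative (diagonalPolynomial (P i + N i)))) ≤ L)
    (hK : ‖1 - A * polynomialJacobian P N c‖ + ‖A‖ * (L * r) ≤ K) (hK1 : K < 1)
    (hc : ‖A *ᵥ polynomialMap P N c‖ ≤ (1 - K) * r) :
    ∃ x ∈ closedBall c r, polynomialMap P N x = 0 := by
  have hAunit : IsUnit A := isUnit_of_norm_one_sub_mul_lt_one (B := polynomialJacobian P N c)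
    ((le_add_of_nonneg_right (by positivity)).trans_lt (hK.trans_lt hK1))
  lift K to ℝ≥0 using le_trans (by positivity) hK
  refine exists_zero_of_norm_id_sub_comp_le (A := ContinuousLinearMap.mk A.mulVecLin)
    (Matrix.mulVec_injective_iff_isUnit.2 hAunit)
    (fun x _ => hasFDerivAt_polynomialMap P N x) (fun x hx => ?_) hc hr
  have hle : ∀ z ∈ closedBall c r, ‖z‖ ≤ ρ := fun z hz =>
    (norm_le_norm_add_norm_sub' z c).trans
      ((add_le_add_right (mem_closedBall_iff_norm.1 hz) _).trans hρ)
  calc ‖ContinuousLinearMap.id ℝ (ι → ℝ) - ContinuousLinearMap.mk A.mulVecLin ∘L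
          ContinuousLinearMap.mk (polynomialJacobian P N x).mulVecLin‖
    _ = ‖1 - A * polynomialJacobian P N x‖ := by
      rw [Matrix.linfty_opNorm_eq_opNorm]
      congr 1
      ext v i
      change (v - A *ᵥ polynomialJacobian P N x *ᵥ v) i =
        ((1 - A * polynomialJacobian P N x) *ᵥ v) i
      rw [Matrix.sub_mulVec, Matrix.one_mulVec, Matrix.mulVec_mulVec]
    _ = ‖(1 - A * polynomialJacobian P N c) -
          A * (polynomialJacobian P N x - polynomialJacobian P N c)‖ := by
      congr 1
      rw [mul_sub]
      abel
    _ ≤ ‖1 - A * polynomialJacobian P N c‖ +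
          ‖A‖ * ‖polynomialJacobian P N x - polynomialJacobian P N c‖ :=
      (norm_sub_le _ _).trans (add_le_add_right (norm_mul_le _ _) _)
    _ ≤ ‖1 - A * polynomialJacobian P N c‖ + ‖A‖ * (L * r) := by
      gcongr
      refine (norm_polynomialJacobian_sub_le hL (hle x hx)
        (hle c (mem_closedBall_self hr))).trans ?_
      gcongr
      exact mem_closedBall_iff_norm.1 hx
    _ ≤ K := hK

end SquareSystem

section Einstein

open MvPolynomial (X)

/-- The sums of the monomials with positive sign in the four left-hand sides of the Einstein
system, in the variables `X 0 = x1`, `X 1 = x2`, `X 2 = x12`, `X 3 = x13`. -/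
noncomputable def einsteinPos : Fin 4 → MvPolynomial (Fin 4) ℝ≥0 :=
  ![X 0 ^ 2 * X 2 ^ 2 * X 1 + X 0 ^ 2 * X 3 ^ 2 * X 1 + 2 * X 2 ^ 2 * X 3 ^ 2 * X 1,
    3 * X 0 * X 3 * X 1 + 2 * X 2 ^ 2 * X 3 * X 1 ^ 2 + 4 * X 2 ^ 2 * X 3
      + 2 * X 2 * X 3 ^ 2 * X 1 + 2 * X 2 * X 1 + 5 * X 3 * X 1 ^ 2,
    3 * X 0 * X 2 ^ 2 + 4 * X 2 ^ 3 * X 3 + 16 * X 2 * X 3 ^ 2,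
    3 * X 2 * X 3 ^ 2 * X 1 + 16 * X 2 * X 3 + 4 * X 3 ^ 3]

/-- The sums of the monomials with negative sign in the four left-hand sides of the Einstein
system, without their signs, so that the system reads `einsteinPos - einsteinNeg = 0`. -/
noncomputable def einsteinNeg : Fin 4 → MvPolynomial (Fin 4) ℝ≥0 :=
  ![X 0 * X 2 ^ 2 * X 3 ^ 2 * X 1 ^ 2 + 2 * X 0 * X 2 ^ 2 * X 3 ^ 2 + X 0 * X 3 ^ 2 * X 1 ^ 2,
    2 * X 2 ^ 3 * X 1 + 16 * X 2 * X 3 * X 1,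
    3 * X 0 * X 3 ^ 2 + 16 * X 2 ^ 2 * X 3 + 4 * X 2 * X 3 ^ 3 + 3 * X 3 ^ 2 * X 1,
    3 * X 0 * X 2 + 16 * X 2 * X 3 ^ 2 + 4 * X 3]

theorem polynomialMap_einstein (a b c d : ℝ) :
    polynomialMap einsteinPos einsteinNeg ![a, b, c, d] =
      ![a ^ 2 * c ^ 2 * b + a ^ 2 * d ^ 2 * b - a * c ^ 2 * d ^ 2 * b ^ 2 - 2 * a * c ^ 2 * d ^ 2
          - a * d ^ 2 * b ^ 2 + 2 * c ^ 2 * d ^ 2 * b,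
        3 * a * d * b - 2 * c ^ 3 * b + 2 * c ^ 2 * d * b ^ 2 + 4 * c ^ 2 * d
          + 2 * c * d ^ 2 * b - 16 * c * d * b + 2 * c * b + 5 * d * b ^ 2,
        3 * a * c ^ 2 - 3 * a * d ^ 2 + 4 * c ^ 3 * d - 16 * c ^ 2 * d - 4 * c * d ^ 3
          + 16 * c * d ^ 2 - 3 * d ^ 2 * b,
        -3 * a * c + 3 * c * d ^ 2 * b - 16 * c * d ^ 2 + 16 * c * d + 4 * d ^ 3 - 4 * d] := by
  ext i
  fin_cases i <;>
    simp only [polynomialMap, einsteinPos, einsteinNeg, Fin.zero_eta, Fin.mk_one, Fin.reduceFinMk,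
      Matrix.cons_val, map_add, map_mul, map_pow, MvPolynomial.aeval_X,
      MvPolynomial.aeval_ofNat] <;>
    ring

theorem polynomialJacobian_einstein (a b c d : ℝ) :
    polynomialJacobian einsteinPos einsteinNeg ![a, b, c, d] =
      !![2 * a * c ^ 2 * b + 2 * a * d ^ 2 * b - c ^ 2 * d ^ 2 * b ^ 2 - 2 * c ^ 2 * d ^ 2
            - d ^ 2 * b ^ 2,
          a ^ 2 * c ^ 2 + a ^ 2 * d ^ 2 - 2 * a * c ^ 2 * d ^ 2 * b - 2 * a * d ^ 2 * b
            + 2 * c ^ 2 * d ^ 2,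
          2 * a ^ 2 * c * b - 2 * a * c * d ^ 2 * b ^ 2 - 4 * a * c * d ^ 2 + 4 * c * d ^ 2 * b,
          2 * a ^ 2 * d * b - 2 * a * c ^ 2 * d * b ^ 2 - 4 * a * c ^ 2 * d - 2 * a * d * b ^ 2
            + 4 * c ^ 2 * d * b;
        3 * d * b,
          3 * a * d - 2 * c ^ 3 + 4 * c ^ 2 * d * b + 2 * c * d ^ 2 - 16 * c * d + 2 * c
            + 10 * d * b,
          -6 * c ^ 2 * b + 4 * c * d * b ^ 2 + 8 * c * d + 2 * d ^ 2 * b - 16 * d * b + 2 * b,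
          3 * a * b + 2 * c ^ 2 * b ^ 2 + 4 * c ^ 2 + 4 * c * d * b - 16 * c * b + 5 * b ^ 2;
        3 * c ^ 2 - 3 * d ^ 2,
          -3 * d ^ 2,
          6 * a * c + 12 * c ^ 2 * d - 32 * c * d - 4 * d ^ 3 + 16 * d ^ 2,
          -6 * a * d + 4 * c ^ 3 - 16 * c ^ 2 - 12 * c * d ^ 2 + 32 * c * d - 6 * d * b;
        -3 * c,
          3 * c * d ^ 2,
          -3 * a + 3 * d ^ 2 * b - 16 * d ^ 2 + 16 * d,
          6 * c * d * b - 32 * c * d + 16 * c + 12 * d ^ 2 - 4] := by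
  ext i j
  fin_cases i <;> fin_cases j <;>
    simp only [polynomialJacobian, einsteinPos, einsteinNeg, Fin.zero_eta, Fin.mk_one,
      Fin.reduceFinMk, Fin.reduceEq, Matrix.of_apply, Matrix.cons_val, Derivation.leibniz,
      Derivation.leibniz_pow, MvPolynomial.pderiv_X, Pi.single_apply, if_true, if_false,
      pderiv_ofNat, smul_eq_mul, nsmul_eq_mul, map_add, map_mul, map_pow, map_natCast, map_zero,
      map_one, MvPolynomial.aeval_X, MvPolynomial.aeval_ofNat] <;>
    ring

theorem derivative_derivative_diagonalPolynomial_einstein_le (i : Fin 4) :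
    Polynomial.aeval (3 : ℝ)
      (derivative (derivative (diagonalPolynomial (einsteinPos i + einsteinNeg i)))) ≤
        (14000 : ℝ≥0) := by
  fin_cases i <;>
    simp only [diagonalPolynomial, einsteinPos, einsteinNeg, Fin.zero_eta, Fin.mk_one,
      Fin.reduceFinMk, Matrix.cons_val, map_add, map_mul, map_pow, map_ofNat,
      MvPolynomial.aeval_X] <;>
    norm_num [map_ofNat]

/-- Approximations `(x1, x2, x12, x13)` of four positive solutions of the Einstein system, found by
numerical Newton iteration and rounded to seven decimals. -/
noncomputable def einsteinApproxRoot : Fin 4 → Fin 4 → ℝ :=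
  ![![0.2762819, 0.2512669, 0.4608871, 0.5687229],
    ![1.1122497, 0.4179372, 1.5987415, 0.5957763],
    ![0.7015003, 1.8668916, 2.6834594, 1.6784824],
    ![0.4418090, 0.4857935, 0.8103896, 1.7583257]]

/-- The inverses of the Jacobian at the points `einsteinApproxRoot`, rounded to two or three
decimals. -/
noncomputable def einsteinApproxInverse : Fin 4 → Matrix (Fin 4) (Fin 4) ℝ :=
  ![!![-16.35, -1.52, -0.32, -0.08; -5.43, -1.3, -0.19, -0.01;
      -9.36, -0.86, -0.03, 0.34; -15.05, -1.82, 0.37, 0.3],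
    !![0, -0.03, 0.04, -0.16; -0.05, -0.11, -0.02, -0.05;
      -0.51, -0.17, 0.18, 0.16; -0.26, -0.1, -0.02, -0.08],
    !![-0.011, -0.003, -0.001, -0.003; 0, 0.013, 0.009, 0.028;
      0.005, 0.007, 0.029, 0.003; 0.003, 0.013, 0.004, -0.017],
    !![-0.26, -0.08, -0.04, 0; 0.03, -0.11, -0.05, 0;
      0.17, 0.1, -0.03, -0.04; 0.48, 0.54, -0.07, 0.04]]

theorem norm_einsteinApproxInverse_le (i : Fin 4) : ‖einsteinApproxInverse i‖ ≤ 20 := by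
  rw [linfty_opNorm_le_iff (by norm_num)]
  intro k
  fin_cases i <;> fin_cases k <;>
    simp only [einsteinApproxInverse, Fin.sum_univ_four, Fin.zero_eta, Fin.mk_one, Fin.reduceFinMk,
      Matrix.of_apply, Matrix.cons_val] <;>
    norm_num

theorem norm_one_sub_einsteinApproxInverse_mul_le (i : Fin 4) :
    ‖1 - einsteinApproxInverse i *
      polynomialJacobian einsteinPos einsteinNeg (einsteinApproxRoot i)‖ ≤ 1 / 5 := by
  rw [linfty_opNorm_le_iff (by norm_num)]
  intro k
  fin_cases i <;> fin_cases k <;>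
    simp only [einsteinApproxInverse, einsteinApproxRoot, polynomialJacobian_einstein,
      Fin.sum_univ_four, Matrix.sub_apply, Matrix.one_apply, Matrix.mul_apply, Fin.zero_eta,
      Fin.mk_one, Fin.reduceFinMk, Fin.reduceEq, if_true, if_false,
      Matrix.of_apply, Matrix.cons_val] <;>
    norm_num [abs_le]

theorem norm_einsteinApproxInverse_mulVec_le (i : Fin 4) :
    ‖einsteinApproxInverse i *ᵥ polynomialMap einsteinPos einsteinNeg (einsteinApproxRoot i)‖ ≤
      5 / 10 ^ 7 := by
  rw [pi_norm_le_iff_of_nonneg (by norm_num)]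
  intro k
  fin_cases i <;> fin_cases k <;>
    simp only [einsteinApproxInverse, einsteinApproxRoot, polynomialMap_einstein, Matrix.mulVec,
      dotProduct, Fin.sum_univ_four, Fin.zero_eta, Fin.mk_one, Fin.reduceFinMk, Matrix.of_apply,
      Matrix.cons_val] <;>
    norm_num [abs_le]

theorem norm_einsteinApproxRoot_le (i : Fin 4) : ‖einsteinApproxRoot i‖ ≤ 2.9 := by
  rw [pi_norm_le_iff_of_nonneg (by norm_num)]
  intro k
  fin_cases i <;> fin_cases k <;>
    simp only [einsteinApproxRoot, Fin.zero_eta, Fin.mk_one, Fin.reduceFinMk, Matrix.cons_val] <;>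
    norm_num

theorem lt_einsteinApproxRoot (i k : Fin 4) : 1 / 10 ^ 6 < einsteinApproxRoot i k := by
  fin_cases i <;> fin_cases k <;>
    simp only [einsteinApproxRoot, Fin.zero_eta, Fin.mk_one, Fin.reduceFinMk, Matrix.cons_val] <;>
    norm_num

theorem exists_einstein_zero_mem_closedBall (i : Fin 4) :
    ∃ v ∈ closedBall (einsteinApproxRoot i) (1 / 10 ^ 6),
      polynomialMap einsteinPos einsteinNeg v = 0 := by
  refine exists_polynomialMap_eq_zero (A := einsteinApproxInverse i) (ρ := 3) (K := 1 / 2)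
    (by norm_num) ?_ derivative_derivative_diagonalPolynomial_einstein_le ?_ (by norm_num) ?_
  · linarith [norm_einsteinApproxRoot_le i]
  · push_cast
    linarith [norm_one_sub_einsteinApproxInverse_mul_le i, norm_einsteinApproxInverse_le i]
  · exact (norm_einsteinApproxInverse_mulVec_le i).trans (by norm_num)

theorem isEinsteinSolV2H3_of_polynomialMap_eq_zero {v : Fin 4 → ℝ} (hpos : ∀ k, 0 < v k)
    (hv : polynomialMap einsteinPos einsteinNeg v = 0) :
    IsEinsteinSolV2H3 (v 0, v 1, v 2, v 3) := by
  have hvec : v = ![v 0, v 1, v 2, v 3] := by ext k; fin_cases k <;> rfl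
  rw [hvec, polynomialMap_einstein] at hv
  exact ⟨hpos 0, hpos 1, hpos 2, hpos 3, congr_fun hv 0, congr_fun hv 1, congr_fun hv 2,
    congr_fun hv 3⟩

theorem exists_isEinsteinSolV2H3_abs_sub_einsteinApproxRoot_le (i : Fin 4) :
    ∃ v : ℝ × ℝ × ℝ × ℝ, IsEinsteinSolV2H3 v ∧ |v.2.2.2 - einsteinApproxRoot i 3| ≤ 1 / 10 ^ 6 := by
  obtain ⟨v, hball, hzero⟩ := exists_einstein_zero_mem_closedBall i
  have hnear (k : Fin 4) : |v k - einsteinApproxRoot i k| ≤ 1 / 10 ^ 6 :=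
    (norm_le_pi_norm (v - einsteinApproxRoot i) k).trans (mem_closedBall_iff_norm.1 hball)
  have hpos (k : Fin 4) : 0 < v k := by linarith [lt_einsteinApproxRoot i k, (abs_le.1 (hnear k)).1]
  exact ⟨_, isEinsteinSolV2H3_of_polynomialMap_eq_zero hpos hzero, hnear 3⟩

end Einstein

/-- **Theorem 4.1(1), new metrics.**  There exist at least four pairwise distinct quadruples
`(x1, x2, x12, x13)` of positive reals solving the system `f1 = f2 = f3 = f4 = 0` with
`x13 ≠ 1`; moreover they can be chosen with pairwise distinct `x13`-coordinates, two of them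
having `x13 ∈ (0, 1)` and two having `x13 ∈ (1, 2)`. -/
theorem four_new_einstein_V2H3 :
    ∃ v : Fin 4 → ℝ × ℝ × ℝ × ℝ,
      (∀ i, IsEinsteinSolV2H3 (v i)) ∧
      (∀ i j, i ≠ j → v i ≠ v j) ∧
      (∀ i j, i ≠ j → (v i).2.2.2 ≠ (v j).2.2.2) ∧
      (∀ i, (v i).2.2.2 ≠ 1) ∧
      (v 0).2.2.2 ∈ Set.Ioo (0 : ℝ) 1 ∧ (v 1).2.2.2 ∈ Set.Ioo (0 : ℝ) 1 ∧
      (v 2).2.2.2 ∈ Set.Ioo (1 : ℝ) 2 ∧ (v 3).2.2.2 ∈ Set.Ioo (1 : ℝ) 2 := by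
  choose v hsol hnear using exists_isEinsteinSolV2H3_abs_sub_einsteinApproxRoot_le
  have hbounds (i : Fin 4) := abs_le.1 (hnear i)
  obtain ⟨h0, h1, h2, h3⟩ : (v 0).2.2.2 ∈ Set.Ioo 0 0.57 ∧ (v 1).2.2.2 ∈ Set.Ioo 0.57 1 ∧
      (v 2).2.2.2 ∈ Set.Ioo 1 1.7 ∧ (v 3).2.2.2 ∈ Set.Ioo 1.7 2 := by
    have h0 := hbounds 0
    have h1 := hbounds 1
    have h2 := hbounds 2
    have h3 := hbounds 3
    simp only [einsteinApproxRoot, Matrix.cons_val] at h0 h1 h2 h3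
    refine ⟨⟨?_, ?_⟩, ⟨?_, ?_⟩, ⟨?_, ?_⟩, ⟨?_, ?_⟩⟩ <;> linarith
  have hmono : StrictMono fun i => (v i).2.2.2 := by
    refine Fin.strictMono_iff_lt_succ.2 fun i => ?_
    fin_cases i
    exacts [h0.2.trans h1.1, h1.2.trans h2.1, h2.2.trans h3.1]
  have hne (i j : Fin 4) (hij : i ≠ j) : (v i).2.2.2 ≠ (v j).2.2.2 := hmono.injective.ne hij
  refine ⟨v, hsol, fun i j hij h => hne i j hij (by rw [h]), hne, fun i => ?_,
    ⟨h0.1, h0.2.trans (by norm_num)⟩, ⟨lt_trans (by norm_num) h1.1, h1.2⟩,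
    ⟨h2.1, h2.2.trans (by norm_num)⟩, ⟨lt_trans (by norm_num) h3.1, h3.2⟩⟩
  fin_cases i
  exacts [(h0.2.trans (by norm_num)).ne, h1.2.ne, h2.1.ne', (lt_trans (by norm_num) h3.1).ne']
end

section
/- There exist at least eight pairwise distinct quadruples (x1, x2, x12, x13) of positive real numbers solving the system g1 = g2 = g3 = g4 = 0 below: four of them with x13 ≠ 1 and pairwise distinct x13-coordinates (two with x13 ∈ (0,1) and two with x13 ∈ (1,2)); two of the form (t, t, t, 1) with distinct positive values of t; and two of the form (a, a, b, 1) with positive a ≠ b, for two distinct pairs (a, b). -/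
/-- A quadruple `(x1, x2, x12, x13)` of positive reals solving the Einstein system
`g1 = g2 = g3 = g4 = 0` for `Ad(Sp(1)×Sp(1)×Sp(2))`-invariant metrics on
`V₂ℍ⁴ = Sp(4)/Sp(2)` (normalized by `x23 = 1`). -/
def IsEinsteinSolV2H4 (v : ℝ × ℝ × ℝ × ℝ) : Prop :=
  let x1 := v.1; let x2 := v.2.1; let x12 := v.2.2.1; let x13 := v.2.2.2
  0 < x1 ∧ 0 < x2 ∧ 0 < x12 ∧ 0 < x13 ∧
  2*x1^2*x12^2*x2 + x1^2*x13^2*x2 - 2*x1*x12^2*x13^2*x2^2 - 2*x1*x12^2*x13^2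
    - x1*x13^2*x2^2 + 2*x12^2*x13^2*x2 = 0 ∧
  3*x1*x13*x2 - 4*x12^3*x2 + 4*x12^2*x13*x2^2 + 4*x12^2*x13 + 4*x12*x13^2*x2
    - 20*x12*x13*x2 + 4*x12*x2 + 5*x13*x2^2 = 0 ∧
  3*x1*x12^2 - 3*x1*x13^2 + 6*x12^3*x13 - 20*x12^2*x13 - 6*x12*x13^3
    + 20*x12*x13^2 - 2*x12*x13 - 3*x13^2*x2 = 0 ∧
  -3*x1*x12 + 3*x12*x13^2*x2 - 20*x12*x13^2 + 20*x12*x13 + 4*x13^3 - 4*x13 = 0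

/-!
With `x13 = 1` and `x1 = x2 = a`, `x12 = b` the system reduces to two equations, the first of which
splits as `(a - b) ((b² + 2) a - b) = 0`. The branch `a = b` gives Jensen's metrics as roots of a
quadratic, the branch `a = b / (b² + 2)` the ADN metrics as roots of a quartic that changes sign on
`[1/2, 1]` and on `[3/2, 3]`.

The four other solutions have no simple closed form; they come from a Newton–Kantorovich
argument. If `c` is an approximate zero of a polynomial map `f`, and `A` an approximate inverse of
its Jacobian at `c`, then `A ∘ f` is close to the identity near `c` and therefore maps a small ball
around `c` onto a set containing `0`. The distance from `A ∘ f` to the identity is controlled by the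
Jacobian at `c` alone, because the second derivatives of `f` on a ball around the origin are bounded
by evaluating their coefficientwise absolute values at its radius.
-/

open Metric Matrix
open scoped Matrix.Norms.Operator

theorem exists_eq_zero_of_norm_comp_hasFDerivAt_sub_id_le {E F : Type*} [NormedAddCommGroup E]
    [NormedSpace ℝ E] [CompleteSpace E] [NormedAddCommGroup F] [NormedSpace ℝ F]
    {f : E → F} {f' : E → E →L[ℝ] F} {A : F →L[ℝ] E} {c : E} {r κ : ℝ}
    (hA : Function.Injective A) (hr : 0 ≤ r) (hf : ∀ x ∈ closedBall c r, HasFDerivAt f (f' x) x)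
    (hf' : ∀ x ∈ closedBall c r, ‖A ∘L f' x - .id ℝ E‖ ≤ κ) (hc : ‖A (f c)‖ ≤ (1 - κ) * r) :
    ∃ x ∈ closedBall c r, f x = 0 := by
  have hκ : 0 ≤ κ := (norm_nonneg _).trans (hf' c (mem_closedBall_self hr))
  have happrox : ApproximatesLinearOn (A ∘ f) (.id ℝ E) (closedBall c r) κ.toNNReal := by
    intro x hx y hy
    rw [Real.coe_toNNReal κ hκ]
    exact (convex_closedBall c r).norm_image_sub_le_of_norm_hasFDerivWithin_le'
      (fun z hz ↦ (A.hasFDerivAt.comp z (hf z hz)).hasFDerivWithinAt) hf' hy hx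
  have hsurj := happrox.surjOn_closedBall_of_nonlinearRightInverse
    ⟨id, 1, by simp, by simp⟩ hr subset_rfl
  obtain ⟨x, hx, hx₀⟩ := hsurj (a := 0) (by simpa [hκ] using hc)
  exact ⟨x, hx, hA (by simpa using hx₀)⟩

theorem exists_eq_zero_of_norm_mul_jacobian_sub_one_le {n : Type*} [Fintype n] [DecidableEq n]
    {f : (n → ℝ) → n → ℝ} {J : (n → ℝ) → Matrix n n ℝ} {A : Matrix n n ℝ} {c : n → ℝ} {r κ : ℝ}
    (hr : 0 ≤ r) (hκ : κ < 1)
    (hf : ∀ x ∈ closedBall c r, HasFDerivAt f (J x).mulVecLin.toContinuousLinearMap x)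
    (hJ : ∀ x ∈ closedBall c r, ‖A * J x - 1‖ ≤ κ) (hc : ‖A *ᵥ f c‖ ≤ (1 - κ) * r) :
    ∃ x ∈ closedBall c r, f x = 0 := by
  have hA : IsUnit A := by
    have h : IsUnit (1 - (1 - A * J c)) := isUnit_one_sub_of_norm_lt_one <| by
      rw [norm_sub_rev]
      exact (hJ c (mem_closedBall_self hr)).trans_lt hκ
    rw [sub_sub_cancel] at h
    exact isUnit_of_mul_isUnit_left h
  refine exists_eq_zero_of_norm_comp_hasFDerivAt_sub_id_le
    (A := A.mulVecLin.toContinuousLinearMap) (mulVec_injective_of_isUnit hA) hr hf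
    (fun x hx ↦ le_of_eq_of_le ?_ (hJ x hx)) hc
  rw [linfty_opNorm_eq_opNorm]
  congr 1
  ext
  simp

theorem linfty_opNorm_le_iff_s11 {m n : Type*} [Fintype m] [Fintype n] {A : Matrix m n ℝ} {M : ℝ}
    (hM : 0 ≤ M) : ‖A‖ ≤ M ↔ ∀ i, ∑ j, |A i j| ≤ M := by
  lift M to NNReal using hM
  simp [← coe_nnnorm, linfty_opNNNorm_def, ← Real.norm_eq_abs, ← NNReal.coe_sum]

/-- A real polynomial in the variables `σ`, as the list of its terms `(coefficient, exponents)`.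
Unlike `MvPolynomial`, this is data on which derivatives and majorants evaluate by `simp`. -/
abbrev SparsePoly (σ : Type*) := List (ℝ × (σ → ℕ))

namespace SparsePoly

variable {σ τ : Type*} [Fintype σ]

/-- The value of a polynomial at a real point. -/
def eval (p : SparsePoly σ) (x : σ → ℝ) : ℝ :=
  (p.map fun t ↦ t.1 * ∏ i, x i ^ t.2 i).sum

/-- The formal partial derivative. The truncated exponent `0 - 1 = 0` is harmless, as such a term
has coefficient zero. -/
def pderiv [DecidableEq σ] (i : σ) (p : SparsePoly σ) : SparsePoly σ :=
  p.map fun t ↦ (t.1 * t.2 i, Function.update t.2 i (t.2 i - 1))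

/-- The polynomial with coefficients replaced by their absolute values, evaluated with every
variable equal to `R`; it bounds the polynomial on the sup-norm ball of radius `R`. -/
def majorant (p : SparsePoly σ) (R : ℝ) : ℝ :=
  (p.map fun t ↦ |t.1| * R ^ ∑ i, t.2 i).sum

theorem abs_eval_le_majorant (p : SparsePoly σ) {x : σ → ℝ} {R : ℝ} (hx : ‖x‖ ≤ R) :
    |p.eval x| ≤ p.majorant R := by
  have hterm (k : σ → ℕ) : |∏ i, x i ^ k i| ≤ R ^ ∑ i, k i := by
    rw [Finset.abs_prod, ← Finset.prod_pow_eq_pow_sum]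
    gcongr with i
    rw [abs_pow]
    gcongr
    exact (norm_le_pi_norm x i).trans hx
  induction p with
  | nil => simp [eval, majorant]
  | cons t p ih =>
    simp only [eval, majorant, List.map_cons, List.sum_cons] at ih ⊢
    grw [abs_add_le, abs_mul, hterm, ih]

variable [DecidableEq σ]

/-- The derivative of a polynomial at `x`, assembled from its formal partial derivatives. -/
def grad (p : SparsePoly σ) (x : σ → ℝ) : (σ → ℝ) →L[ℝ] ℝ :=
  ∑ i, (p.pderiv i).eval x • ContinuousLinearMap.proj i

theorem hasFDerivAt_eval (p : SparsePoly σ) (x : σ → ℝ) : HasFDerivAt p.eval (p.grad x) x := by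
  induction p with
  | nil => simpa [eval, grad, pderiv] using! hasFDerivAt_const (0 : ℝ) x
  | cons t p ih =>
    have hpow (i : σ) := (ContinuousLinearMap.proj (R := ℝ) (φ := fun _ : σ ↦ ℝ) i).hasFDerivAt
      (x := x) |>.pow (t.2 i)
    have hterm := (HasFDerivAt.finsetProd fun i (_ : i ∈ Finset.univ) ↦ hpow i).const_mul t.1
    refine (hterm.add ih).congr_fderiv ?_
    simp only [grad, pderiv, eval, List.map_cons, List.sum_cons, add_smul, Finset.sum_add_distrib,
      Finset.smul_sum, smul_smul]
    congr! 3 with i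
    have herase : ∏ j ∈ Finset.univ.erase i, x j ^ Function.update t.2 i (t.2 i - 1) j =
        ∏ j ∈ Finset.univ.erase i, x j ^ t.2 j :=
      Finset.prod_congr rfl fun j hj ↦ by rw [Function.update_of_ne (Finset.ne_of_mem_erase hj)]
    rw [← Finset.prod_erase_mul _ _ (Finset.mem_univ i), Function.update_self, herase]
    simp only [ContinuousLinearMap.proj_apply, nsmul_eq_mul]
    ring

theorem norm_grad_le (p : SparsePoly σ) (x : σ → ℝ) : ‖p.grad x‖ ≤ ∑ i, |(p.pderiv i).eval x| := by
  refine ContinuousLinearMap.opNorm_le_bound _ (by positivity) fun v ↦ ?_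
  simp only [grad, _root_.sum_apply, _root_.smul_apply, ContinuousLinearMap.proj_apply,
    smul_eq_mul, Finset.sum_mul]
  grw [norm_sum_le]
  gcongr with i
  rw [norm_mul, Real.norm_eq_abs]
  grw [norm_le_pi_norm v i]

theorem abs_eval_sub_eval_le (p : SparsePoly σ) {x y : σ → ℝ} {R : ℝ} (hx : ‖x‖ ≤ R)
    (hy : ‖y‖ ≤ R) : |p.eval x - p.eval y| ≤ (∑ i, (p.pderiv i).majorant R) * ‖x - y‖ := by
  rw [← mem_closedBall_zero_iff] at hx hy
  refine (convex_closedBall 0 R).norm_image_sub_le_of_norm_hasFDerivWithin_le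
    (fun z _ ↦ (p.hasFDerivAt_eval z).hasFDerivWithinAt) (fun z hz ↦ ?_) hy hx
  grw [norm_grad_le]
  gcongr with i
  exact abs_eval_le_majorant _ (mem_closedBall_zero_iff.1 hz)

/-- The Jacobian matrix at `x` of a family of polynomials. -/
def jacobian (P : τ → SparsePoly σ) (x : σ → ℝ) : Matrix τ σ ℝ :=
  .of fun i j ↦ ((P i).pderiv j).eval x

theorem hasFDerivAt_eval_family [Finite τ] (P : τ → SparsePoly σ) (x : σ → ℝ) :
    HasFDerivAt (fun x i ↦ (P i).eval x) (jacobian P x).mulVecLin.toContinuousLinearMap x := by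
  cases nonempty_fintype τ
  refine hasFDerivAt_pi'.2 fun i ↦ ((P i).hasFDerivAt_eval x).congr_fderiv ?_
  ext v
  simp [grad, jacobian, mulVec, dotProduct]

theorem norm_jacobian_sub_jacobian_le [Fintype τ] {P : τ → SparsePoly σ} {x y : σ → ℝ} {R K : ℝ}
    (hP : ∀ i, ∑ j, ∑ l, (((P i).pderiv j).pderiv l).majorant R ≤ K) (hK : 0 ≤ K)
    (hx : ‖x‖ ≤ R) (hy : ‖y‖ ≤ R) : ‖jacobian P x - jacobian P y‖ ≤ K * ‖x - y‖ := by
  refine (linfty_opNorm_le_iff_s11 (by positivity)).2 fun i ↦ ?_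
  calc ∑ j, |((P i).pderiv j).eval x - ((P i).pderiv j).eval y|
      ≤ ∑ j, (∑ l, (((P i).pderiv j).pderiv l).majorant R) * ‖x - y‖ := by
        gcongr with j
        exact abs_eval_sub_eval_le _ hx hy
    _ ≤ K * ‖x - y‖ := by
        rw [← Finset.sum_mul]
        gcongr
        exact hP i

theorem exists_common_zero {P : σ → SparsePoly σ} {A : Matrix σ σ ℝ} {c : σ → ℝ} {r R K α κ : ℝ}
    (hP : ∀ i, ∑ j, ∑ l, (((P i).pderiv j).pderiv l).majorant R ≤ K) (hK : 0 ≤ K) (hr : 0 ≤ r)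
    (hcR : ‖c‖ + r ≤ R) (hA : ‖A‖ ≤ α) (hJ : ‖A * jacobian P c - 1‖ ≤ κ)
    (hκ : κ + α * K * r < 1)
    (hc : ‖A *ᵥ fun i ↦ (P i).eval c‖ ≤ (1 - (κ + α * K * r)) * r) :
    ∃ x ∈ closedBall c r, ∀ i, (P i).eval x = 0 := by
  have hJ' (x) (hx : x ∈ closedBall c r) : ‖A * jacobian P x - 1‖ ≤ κ + α * K * r := by
    have hxc : ‖x - c‖ ≤ r := mem_closedBall_iff_norm.1 hx
    have hxR : ‖x‖ ≤ R := by
      have := norm_le_norm_add_norm_sub' x c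
      linarith
    calc ‖A * jacobian P x - 1‖
        = ‖A * jacobian P c - 1 + A * (jacobian P x - jacobian P c)‖ := by
          congr 1
          rw [mul_sub]
          abel
      _ ≤ κ + α * (K * r) := by
          have hα : 0 ≤ α := (norm_nonneg A).trans hA
          grw [norm_add_le, norm_mul_le, hJ, hA,
            norm_jacobian_sub_jacobian_le hP hK hxR (by linarith), hxc]
      _ = κ + α * K * r := by ring
  obtain ⟨x, hx, hx₀⟩ := exists_eq_zero_of_norm_mul_jacobian_sub_one_le hr hκ
    (fun x _ ↦ hasFDerivAt_eval_family P x) hJ' hc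
  exact ⟨x, hx, fun i ↦ congrFun hx₀ i⟩

end SparsePoly

/-- The Einstein system `g1, g2, g3, g4`, with exponents in the order `(x1, x2, x12, x13)`. -/
noncomputable def einsteinSystem : Fin 4 → SparsePoly (Fin 4) :=
  ![[(2, ![2, 1, 2, 0]), (1, ![2, 1, 0, 2]), (-2, ![1, 2, 2, 2]), (-2, ![1, 0, 2, 2]),
      (-1, ![1, 2, 0, 2]), (2, ![0, 1, 2, 2])],
    [(3, ![1, 1, 0, 1]), (-4, ![0, 1, 3, 0]), (4, ![0, 2, 2, 1]), (4, ![0, 0, 2, 1]),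
      (4, ![0, 1, 1, 2]), (-20, ![0, 1, 1, 1]), (4, ![0, 1, 1, 0]), (5, ![0, 2, 0, 1])],
    [(3, ![1, 0, 2, 0]), (-3, ![1, 0, 0, 2]), (6, ![0, 0, 3, 1]), (-20, ![0, 0, 2, 1]),
      (-6, ![0, 0, 1, 3]), (20, ![0, 0, 1, 2]), (-2, ![0, 0, 1, 1]), (-3, ![0, 1, 0, 2])],
    [(-3, ![1, 0, 1, 0]), (3, ![0, 1, 1, 2]), (-20, ![0, 0, 1, 2]), (20, ![0, 0, 1, 1]),
      (4, ![0, 0, 0, 3]), (-4, ![0, 0, 0, 1])]]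

theorem isEinsteinSolV2H4_iff {x : Fin 4 → ℝ} : IsEinsteinSolV2H4 (x 0, x 1, x 2, x 3) ↔
    (∀ i, 0 < x i) ∧ ∀ i, (einsteinSystem i).eval x = 0 := by
  simp only [IsEinsteinSolV2H4, Fin.forall_fin_succ, einsteinSystem, SparsePoly.eval]
  simp only [Fin.isValue, neg_mul, Fin.succ_zero_eq_one, Fin.succ_one_eq_two, Fin.reduceSucc,
    IsEmpty.forall_iff, and_true, Fin.prod_univ_four, cons_val_zero, List.map_cons, cons_val_one,
    pow_one, cons_val, pow_zero, mul_one, one_mul, List.map_nil, List.sum_cons, List.sum_nil,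
    add_zero, cons_val_succ, cons_val_fin_one]
  ring_nf
  simp only [and_assoc]

theorem sum_majorant_einsteinSystem_le (i : Fin 4) :
    ∑ j, ∑ l, (((einsteinSystem i).pderiv j).pderiv l).majorant 3 ≤ 25000 := by
  fin_cases i <;>
    simp [einsteinSystem, SparsePoly.pderiv, SparsePoly.majorant, Fin.sum_univ_four,
      Function.update] <;>
    norm_num

/-- Approximations, found by numerical Newton iteration, of four zeros of `einsteinSystem` with
last coordinate different from `1`. -/
noncomputable def approxSol : Fin 4 → Fin 4 → ℝ :=
  ![![0.2270022, 0.2074911, 0.3621983, 0.6439843], ![1.2936925, 0.2926419, 1.7077281, 0.6839966],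
    ![0.4278411, 1.8913727, 2.4966909, 1.4619956], ![0.322199, 0.3524965, 0.5624335, 1.5528328]]

/-- Approximate inverses of the Jacobian of `einsteinSystem` at the points `approxSol`, rounded to
three decimals. -/
noncomputable def approxInv : Fin 4 → Matrix (Fin 4) (Fin 4) ℝ :=
  ![!![-18.627, -1.593, -0.311, -0.106; -4.765, -1.376, -0.2, -0.054;
      -8.272, -0.734, -0.011, 0.252; -19.947, -2.372, 0.247, 0.172],
    !![0.132, 0.048, 0.027, -0.105; -0.006, -0.046, -0.011, -0.023;
      -0.183, -0.083, 0.085, 0.049; -0.095, -0.048, -0.01, -0.053],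
    !![-0.01, -0.002, -0.001, -0.003; 0, 0.01, 0.01, 0.027;
      0.003, 0.003, 0.024, 0.002; 0.002, 0.005, 0.003, -0.017],
    !![-0.715, -0.149, -0.048, 0.002; 0.088, -0.185, -0.069, 0.006;
      0.376, 0.147, -0.026, -0.056; 1.385, 0.899, -0.066, 0.034]]

theorem approxSol_mem_Icc (k i : Fin 4) : approxSol k i ∈ Set.Icc (1 / 10) (29 / 10) := by
  fin_cases k <;> fin_cases i <;> norm_num [approxSol]

theorem norm_approxSol_le (k : Fin 4) : ‖approxSol k‖ ≤ 29 / 10 := by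
  refine (pi_norm_le_iff_of_nonneg (by norm_num)).2 fun i ↦ ?_
  obtain ⟨h₀, h₁⟩ := approxSol_mem_Icc k i
  exact abs_le.2 ⟨by linarith, h₁⟩

theorem norm_approxInv_le (k : Fin 4) : ‖approxInv k‖ ≤ 25 := by
  refine (linfty_opNorm_le_iff_s11 (by norm_num)).2 fun i ↦ ?_
  fin_cases k <;> fin_cases i <;>
    simp [approxInv, Fin.sum_univ_four] <;> norm_num [abs_of_neg, abs_of_pos]

theorem norm_approxInv_mulVec_le (k : Fin 4) :
    ‖approxInv k *ᵥ fun i ↦ (einsteinSystem i).eval (approxSol k)‖ ≤ 1 / 2 * (1 / 10 ^ 7) := by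
  refine (pi_norm_le_iff_of_nonneg (by norm_num)).2 fun i ↦ ?_
  fin_cases k <;> fin_cases i <;>
    simp [approxInv, approxSol, einsteinSystem, SparsePoly.eval, mulVec, dotProduct,
      Fin.sum_univ_four, Fin.prod_univ_four] <;>
    norm_num [abs_of_neg, abs_of_pos]

theorem jacobian_einsteinSystem (a b c d : ℝ) :
    SparsePoly.jacobian einsteinSystem ![a, b, c, d] =
    !![4 * a * b * c ^ 2 + 2 * a * b * d ^ 2 - 2 * b ^ 2 * c ^ 2 * d ^ 2 - 2 * c ^ 2 * d ^ 2
        - b ^ 2 * d ^ 2,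
      2 * a ^ 2 * c ^ 2 + a ^ 2 * d ^ 2 - 4 * a * b * c ^ 2 * d ^ 2 - 2 * a * b * d ^ 2
        + 2 * c ^ 2 * d ^ 2,
      4 * a ^ 2 * b * c - 4 * a * b ^ 2 * c * d ^ 2 - 4 * a * c * d ^ 2 + 4 * b * c * d ^ 2,
      2 * a ^ 2 * b * d - 4 * a * b ^ 2 * c ^ 2 * d - 4 * a * c ^ 2 * d - 2 * a * b ^ 2 * d
        + 4 * b * c ^ 2 * d;
      3 * b * d,
      3 * a * d - 4 * c ^ 3 + 8 * b * c ^ 2 * d + 4 * c * d ^ 2 - 20 * c * d + 4 * c + 10 * b * d,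
      -12 * b * c ^ 2 + 8 * b ^ 2 * c * d + 8 * c * d + 4 * b * d ^ 2 - 20 * b * d + 4 * b,
      3 * a * b + 4 * b ^ 2 * c ^ 2 + 4 * c ^ 2 + 8 * b * c * d - 20 * b * c + 5 * b ^ 2;
      3 * c ^ 2 - 3 * d ^ 2,
      -3 * d ^ 2,
      6 * a * c + 18 * c ^ 2 * d - 40 * c * d - 6 * d ^ 3 + 20 * d ^ 2 - 2 * d,
      -6 * a * d + 6 * c ^ 3 - 20 * c ^ 2 - 18 * c * d ^ 2 + 40 * c * d - 2 * c - 6 * b * d;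
      -3 * c,
      3 * c * d ^ 2,
      -3 * a + 3 * b * d ^ 2 - 20 * d ^ 2 + 20 * d,
      6 * b * c * d - 40 * c * d + 20 * c + 12 * d ^ 2 - 4] := by
  ext i j
  fin_cases i <;> fin_cases j <;>
    simp [SparsePoly.jacobian, einsteinSystem, SparsePoly.eval, SparsePoly.pderiv,
      Fin.prod_univ_four, Function.update] <;>
    ring

theorem norm_approxInv_mul_jacobian_sub_one_le (k : Fin 4) :
    ‖approxInv k * SparsePoly.jacobian einsteinSystem (approxSol k) - 1‖ ≤ 1 / 8 := by
  refine (linfty_opNorm_le_iff_s11 (by norm_num)).2 fun i ↦ ?_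
  simp only [Matrix.sub_apply, mul_apply, one_apply, Fin.sum_univ_four]
  fin_cases k <;> fin_cases i <;>
    simp [approxInv, approxSol, jacobian_einsteinSystem] <;> norm_num [abs_of_neg, abs_of_pos]

theorem exists_isEinsteinSolV2H4_near_approxSol (k : Fin 4) :
    ∃ v, IsEinsteinSolV2H4 v ∧ |v.2.2.2 - approxSol k 3| ≤ 1 / 10 ^ 7 := by
  obtain ⟨x, hx, hx₀⟩ := SparsePoly.exists_common_zero (R := 3) (r := 1 / 10 ^ 7)
    sum_majorant_einsteinSystem_le (by norm_num) (by norm_num)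
    (by grw [norm_approxSol_le]; norm_num) (norm_approxInv_le k)
    (norm_approxInv_mul_jacobian_sub_one_le k) (by norm_num)
    ((norm_approxInv_mulVec_le k).trans (by norm_num))
  have hxc (i : Fin 4) : |x i - approxSol k i| ≤ 1 / 10 ^ 7 :=
    (norm_le_pi_norm (x - approxSol k) i).trans (mem_closedBall_iff_norm.1 hx)
  have hpos (i : Fin 4) : 0 < x i := by
    linarith [neg_le_of_abs_le (hxc i), (approxSol_mem_Icc k i).1]
  exact ⟨_, isEinsteinSolV2H4_iff.2 ⟨hpos, hx₀⟩, hxc 3⟩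

theorem exists_strictMono_isEinsteinSolV2H4 : ∃ w : Fin 4 → ℝ × ℝ × ℝ × ℝ,
    (∀ k, IsEinsteinSolV2H4 (w k)) ∧ StrictMono (fun k ↦ (w k).2.2.2) ∧
      (w 1).2.2.2 < 1 ∧ 1 < (w 2).2.2.2 ∧ (w 3).2.2.2 < 2 := by
  choose w hw hwc using exists_isEinsteinSolV2H4_near_approxSol
  have h₀ : |(w 0).2.2.2 - 0.6439843| ≤ 1 / 10 ^ 7 := hwc 0
  have h₁ : |(w 1).2.2.2 - 0.6839966| ≤ 1 / 10 ^ 7 := hwc 1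
  have h₂ : |(w 2).2.2.2 - 1.4619956| ≤ 1 / 10 ^ 7 := hwc 2
  have h₃ : |(w 3).2.2.2 - 1.5528328| ≤ 1 / 10 ^ 7 := hwc 3
  rw [abs_le] at h₀ h₁ h₂ h₃
  have h₀₁ : (w 0).2.2.2 < (w 1).2.2.2 := by linarith
  have h₁₂ : (w 1).2.2.2 < (w 2).2.2.2 := by linarith
  have h₂₃ : (w 2).2.2.2 < (w 3).2.2.2 := by linarith
  have hmono : StrictMono fun k ↦ (w k).2.2.2 :=
    Fin.strictMono_iff_lt_succ.2 fun | 0 => h₀₁ | 1 => h₁₂ | 2 => h₂₃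
  exact ⟨w, hw, hmono, by linarith, by linarith, by linarith⟩

theorem isEinsteinSolV2H4_diag_iff {a b : ℝ} : IsEinsteinSolV2H4 (a, a, b, 1) ↔ 0 < a ∧ 0 < b ∧
    (a - b) * ((b ^ 2 + 2) * a - b) = 0 ∧
    3 * a * (b ^ 2 - 2) + 2 * b * (3 * b ^ 2 - 10 * b + 6) = 0 := by
  constructor
  · rintro ⟨ha, -, hb, -, -, hg₂, hg₃, -⟩
    exact ⟨ha, hb, by linear_combination hg₂ / 4, by linear_combination hg₃⟩
  · rintro ⟨ha, hb, h₂, h₃⟩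
    exact ⟨ha, ha, hb, one_pos, by ring, by linear_combination 4 * h₂, by linear_combination h₃,
      by ring⟩

theorem isEinsteinSolV2H4_jensen {t : ℝ} (ht₀ : 0 < t) (ht : 9 * t ^ 2 - 20 * t + 6 = 0) :
    IsEinsteinSolV2H4 (t, t, t, 1) :=
  isEinsteinSolV2H4_diag_iff.2 ⟨ht₀, ht₀, by ring, by linear_combination t * ht⟩

theorem isEinsteinSolV2H4_adn {b : ℝ} (hb₀ : 0 < b)
    (hb : 6 * b ^ 4 - 20 * b ^ 3 + 27 * b ^ 2 - 40 * b + 18 = 0) :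
    IsEinsteinSolV2H4 (b / (b ^ 2 + 2), b / (b ^ 2 + 2), b, 1) := by
  refine isEinsteinSolV2H4_diag_iff.2 ⟨by positivity, hb₀, ?_, ?_⟩
  · field_simp
    ring
  · field_simp
    linear_combination b * hb

theorem exists_ne_isEinsteinSolV2H4_jensen : ∃ t u : ℝ, t ≠ u ∧
    IsEinsteinSolV2H4 (t, t, t, 1) ∧ IsEinsteinSolV2H4 (u, u, u, 1) := by
  have hsq : √46 ^ 2 = 46 := Real.sq_sqrt (by norm_num)
  have hpos : 0 < √46 := by positivity
  have hlt : √46 < 10 := (Real.sqrt_lt' (by norm_num)).2 (by norm_num)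
  exact ⟨(10 - √46) / 9, (10 + √46) / 9, by intro h; linarith,
    isEinsteinSolV2H4_jensen (by linarith) (by linear_combination hsq / 9),
    isEinsteinSolV2H4_jensen (by linarith) (by linear_combination hsq / 9)⟩

theorem exists_ne_isEinsteinSolV2H4_adn : ∃ a b a' b' : ℝ, a ≠ b ∧ a' ≠ b' ∧ b ≠ b' ∧
    IsEinsteinSolV2H4 (a, a, b, 1) ∧ IsEinsteinSolV2H4 (a', a', b', 1) := by
  let q (b : ℝ) := 6 * b ^ 4 - 20 * b ^ 3 + 27 * b ^ 2 - 40 * b + 18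
  have hq : Continuous q := by fun_prop
  obtain ⟨b, ⟨hb₀, hb₁⟩, hb⟩ := intermediate_value_Icc' (a := 1 / 2) (b := 1) (by norm_num)
    hq.continuousOn (show (0 : ℝ) ∈ Set.Icc _ _ by norm_num [q])
  obtain ⟨b', ⟨hb₀', -⟩, hb'⟩ := intermediate_value_Icc (a := 3 / 2) (b := 3) (by norm_num)
    hq.continuousOn (show (0 : ℝ) ∈ Set.Icc _ _ by norm_num [q])
  have hne {x : ℝ} (hx : 0 < x) : x / (x ^ 2 + 2) ≠ x := (div_lt_self hx (by nlinarith)).ne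
  have hb_pos : 0 < b := by linarith
  have hb_pos' : 0 < b' := by linarith
  exact ⟨_, b, _, b', hne hb_pos, hne hb_pos', by linarith,
    isEinsteinSolV2H4_adn hb_pos hb, isEinsteinSolV2H4_adn hb_pos' hb'⟩

theorem exists_injective_isEinsteinSolV2H4_diag : ∃ d : Fin 4 → ℝ × ℝ × ℝ × ℝ,
    Function.Injective d ∧ (∀ k, IsEinsteinSolV2H4 (d k)) ∧ (∀ k, (d k).2.2.2 = 1) ∧
      (∃ t, 0 < t ∧ d 0 = (t, t, t, 1)) ∧ (∃ t, 0 < t ∧ d 1 = (t, t, t, 1)) ∧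
      (∃ a b, 0 < a ∧ 0 < b ∧ a ≠ b ∧ d 2 = (a, a, b, 1)) ∧
      (∃ a b, 0 < a ∧ 0 < b ∧ a ≠ b ∧ d 3 = (a, a, b, 1)) := by
  obtain ⟨t, u, htu, ht, hu⟩ := exists_ne_isEinsteinSolV2H4_jensen
  obtain ⟨a, b, a', b', hab, hab', hbb', ha, ha'⟩ := exists_ne_isEinsteinSolV2H4_adn
  have hne {r x y : ℝ} (hxy : x ≠ y) : (r, r, r, (1 : ℝ)) ≠ (x, x, y, 1) := by
    rintro ⟨⟩
    exact hxy rfl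
  refine ⟨![(t, t, t, 1), (u, u, u, 1), (a, a, b, 1), (a', a', b', 1)], List.nodup_ofFn.1 ?_,
    ?_, ?_, ⟨t, ht.1, rfl⟩, ⟨u, hu.1, rfl⟩, ⟨a, b, ha.1, ha.2.2.1, hab, rfl⟩,
    ⟨a', b', ha'.1, ha'.2.2.1, hab', rfl⟩⟩
  · simp [htu, hbb', hne hab, hne hab']
  · simp [Fin.forall_fin_succ, ht, hu, ha, ha']
  · simp [Fin.forall_fin_succ]

/-- **Theorem 4.1(2).**  There exist at least eight pairwise distinct quadruples
`(x1, x2, x12, x13)` of positive reals solving `g1 = g2 = g3 = g4 = 0`: four of them with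
`x13 ≠ 1` and pairwise distinct `x13`-coordinates (two with `x13 ∈ (0,1)` and two with
`x13 ∈ (1,2)`); two of the form `(t, t, t, 1)` with distinct positive `t` (Jensen's
metrics); and two of the form `(a, a, b, 1)` with positive `a ≠ b`, for two distinct pairs
`(a, b)` (the ADN metrics). -/
theorem eight_einstein_V2H4 :
    ∃ v : Fin 8 → ℝ × ℝ × ℝ × ℝ,
      Function.Injective v ∧
      (∀ i, IsEinsteinSolV2H4 (v i)) ∧
      (∀ i : Fin 8, i < 4 → (v i).2.2.2 ≠ 1) ∧
      (∀ i j : Fin 8, i < 4 → j < 4 → i ≠ j → (v i).2.2.2 ≠ (v j).2.2.2) ∧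
      (v 0).2.2.2 ∈ Set.Ioo (0 : ℝ) 1 ∧ (v 1).2.2.2 ∈ Set.Ioo (0 : ℝ) 1 ∧
      (v 2).2.2.2 ∈ Set.Ioo (1 : ℝ) 2 ∧ (v 3).2.2.2 ∈ Set.Ioo (1 : ℝ) 2 ∧
      (∃ t : ℝ, 0 < t ∧ v 4 = (t, t, t, 1)) ∧
      (∃ s : ℝ, 0 < s ∧ v 5 = (s, s, s, 1)) ∧
      (∃ a b : ℝ, 0 < a ∧ 0 < b ∧ a ≠ b ∧ v 6 = (a, a, b, 1)) ∧
      (∃ a' b' : ℝ, 0 < a' ∧ 0 < b' ∧ a' ≠ b' ∧ v 7 = (a', a', b', 1)) := by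
  obtain ⟨w, hw, hmono, hw₁, hw₂, hw₃⟩ := exists_strictMono_isEinsteinSolV2H4
  obtain ⟨d, hd_inj, hd, hd_eq, hd₀, hd₁, hd₂, hd₃⟩ := exists_injective_isEinsteinSolV2H4_diag
  have hw₀₁ : (w 0).2.2.2 < (w 1).2.2.2 := hmono (by decide)
  have hw₂₃ : (w 2).2.2.2 < (w 3).2.2.2 := hmono (by decide)
  have hw_inj : Function.Injective w := fun i j h ↦
    hmono.injective (congrArg (·.2.2.2) h)
  have hw_ne : ∀ k, (w k).2.2.2 ≠ 1
    | 0 => (hw₀₁.trans hw₁).ne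
    | 1 => hw₁.ne
    | 2 => hw₂.ne'
    | 3 => (hw₂.trans hw₂₃).ne'
  have hwd (i j) : w i ≠ d j := fun h ↦ hw_ne i (by rw [h, hd_eq])
  have happend (i : Fin 8) (hi : i < 4) : Fin.append w d i = w (i.castLT hi) :=
    Fin.append_left w d (i.castLT hi)
  refine ⟨Fin.append w d, Fin.append_injective_iff.2 ⟨hw_inj, hd_inj, hwd⟩,
    Fin.addCases (m := 4) (n := 4) (by simpa only [Fin.append_left])
      (by simpa only [Fin.append_right]), fun i hi ↦ ?_, fun i j hi hj hij ↦ ?_,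
    ⟨(hw 0).2.2.2.1, hw₀₁.trans hw₁⟩, ⟨(hw 1).2.2.2.1, hw₁⟩,
    ⟨hw₂, hw₂₃.trans hw₃⟩, ⟨hw₂.trans hw₂₃, hw₃⟩, hd₀, hd₁, hd₂, hd₃⟩
  · rw [happend i hi]
    exact hw_ne _
  · rw [happend i hi, happend j hj]
    exact hmono.injective.ne (by simpa [Fin.ext_iff] using hij)
end
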